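/- (Entropy-based analytic ELBO.) Consider data x¹,…,x^N ∈ ℝ^D, a matrix W̃ ∈ ℝ^{D×H}, and Gaussian variational distributions q_n = N(ν^{(n)}, T^{(n)}) on ℝ^H with positive definite covariances T^{(n)}. Set σ²_opt = (1/(N·D))·Σ_n [ tr(W̃ᵀ·W̃·T^{(n)}) + ‖W̃·ν^{(n)} − x^{(n)}‖² ] and λ_h^opt = (1/N)·Σ_n √(T^{(n)}_{hh})·M( ν_h^{(n)} / √(T^{(n)}_{hh}) ). Then the ELBO ℒ(λ,σ²) = (1/N)·Σ_n ∫ q_n(z)·[ log p_{σ²}(x^{(n)}|z) + log p_λ(z) − log q_n(z) ] dz evaluated at λ = λ^opt and σ² = σ²_opt equals the fully analytic expression (1/N)·Σ_{n=1}^N (1/2)·log det(2πe·T^{(n)}) − Σ_{h=1}^H log(2·e·λ_h^opt) − (D/2)·log(2πe·σ²_opt). -/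

import Mathlib

open MeasureTheory Matrix Real

/-- The error function `erf x = (2/sqrt pi) * integral_0^x exp(-t^2) dt`. -/
noncomputable def erf (x : ℝ) : ℝ :=
  (2 / Real.sqrt Real.pi) * ∫ t in (0:ℝ)..x, Real.exp (-t ^ 2)

/-- `M a = sqrt (2/pi) * exp (-a^2/2) + a * erf (a/sqrt 2)`. -/
noncomputable def Mfun (a : ℝ) : ℝ :=
  Real.sqrt (2 / Real.pi) * Real.exp (-a ^ 2 / 2) + a * erf (a / Real.sqrt 2)

/-- Factorized Laplace prior density with scales `lam`. -/
noncomputable def laplacePdf {H : ℕ} (lam : Fin H → ℝ) (z : Fin H → ℝ) : ℝ :=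
  ∏ h, (1 / (2 * lam h)) * Real.exp (-|z h| / lam h)

/-- Gaussian observation density `p_s(x|z) = (2*pi*s)^(-D/2) * exp(-||x - W z||^2/(2*s))`. -/
noncomputable def gaussObsPdf {D H : ℕ} (W : Matrix (Fin D) (Fin H) ℝ) (s : ℝ)
    (x : Fin D → ℝ) (z : Fin H → ℝ) : ℝ :=
  (2 * Real.pi * s) ^ (-(D : ℝ) / 2) *
    Real.exp (-(∑ i, (x i - W.mulVec z i) ^ 2) / (2 * s))

/-- Multivariate Gaussian density on `R^H` with mean `nu` and covariance `T`:
`(2*pi)^(-H/2) * det(T)^(-1/2) * exp(-(z-nu)^T T^{-1} (z-nu) / 2)`. -/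
noncomputable def gaussPdfMulti {H : ℕ} (ν : Fin H → ℝ) (T : Matrix (Fin H) (Fin H) ℝ)
    (z : Fin H → ℝ) : ℝ :=
  (Real.sqrt ((2 * Real.pi) ^ (H : ℕ) * T.det))⁻¹ *
    Real.exp (-(∑ i, (z i - ν i) * (T⁻¹.mulVec fun j => z j - ν j) i) / 2)

open ProbabilityTheory WithLp
open scoped MatrixOrder

lemma aux_pi_gauss (H : ℕ) :
    Measure.pi (fun _ : Fin H => gaussianReal 0 1) =
      (volume : Measure (Fin H → ℝ)).withDensity
        (fun u => ENNReal.ofReal (∏ i, gaussianPDFReal 0 1 (u i))) := by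
  have hint : Integrable (fun u : Fin H → ℝ => ∏ i, gaussianPDFReal 0 1 (u i)) :=
    Integrable.fintype_prod (f := fun _ : Fin H => gaussianPDFReal 0 1)
      (fun i => integrable_gaussianPDFReal 0 1)
  refine Measure.pi_eq (fun s hs => ?_)
  rw [withDensity_apply _ (MeasurableSet.univ_pi hs),
    ← ofReal_integral_eq_lintegral_ofReal hint.integrableOn
      (Filter.Eventually.of_forall fun u => Finset.prod_nonneg fun i _ => gaussianPDFReal_nonneg _ _ _),
    volume_pi, Measure.restrict_pi_pi,
    integral_fintype_prod_eq_prod (f := fun _ : Fin H => gaussianPDFReal 0 1),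
    ENNReal.ofReal_prod_of_nonneg]
  · refine Finset.prod_congr rfl fun i _ => ?_
    rw [gaussianReal_apply_eq_integral _ one_ne_zero]
  · intro i _
    exact integral_nonneg fun u => gaussianPDFReal_nonneg _ _ _

lemma aux_pi_integral (H : ℕ) (g : (Fin H → ℝ) → ℝ) :
    ∫ u, g u ∂(Measure.pi (fun _ : Fin H => gaussianReal 0 1)) =
      ∫ u : Fin H → ℝ, (∏ i, gaussianPDFReal 0 1 (u i)) * g u := by
  rw [aux_pi_gauss, integral_withDensity_eq_integral_toReal_smul]
  · refine integral_congr_ae (Filter.Eventually.of_forall fun u => ?_)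
    simp only [smul_eq_mul]
    rw [ENNReal.toReal_ofReal (Finset.prod_nonneg fun i _ => gaussianPDFReal_nonneg _ _ _)]
  · refine ENNReal.measurable_ofReal.comp (Finset.measurable_prod _ fun i _ => ?_)
    exact (measurable_gaussianPDFReal 0 1).comp (measurable_pi_apply i)
  · exact Filter.Eventually.of_forall fun u => ENNReal.ofReal_lt_top

lemma aux_change {H : ℕ} (ν : Fin H → ℝ) (A : Matrix (Fin H) (Fin H) ℝ) (hA : A.det ≠ 0)
    (g : (Fin H → ℝ) → ℝ) :
    ∫ z, g z = |A.det| * ∫ u, g (ν + A.mulVec u) := by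
  have h1 : ∫ z, g z = ∫ z, g (ν + z) := (integral_add_left_eq_self g ν).symm
  have h2 := Real.map_matrix_volume_pi_eq_smul_volume_pi hA
  have hemb : MeasurableEmbedding (toLin' A) := by
    have := (LinearEquiv.toContinuousLinearEquiv
      (LinearEquiv.ofIsUnitDet (f := toLin' A) (v := Pi.basisFun ℝ (Fin H))
        (v' := Pi.basisFun ℝ (Fin H)) (by
          rw [← Matrix.toLin_eq_toLin', LinearMap.toMatrix_toLin]
          exact hA.isUnit))).toHomeomorph.measurableEmbedding
    exact this
  have h3 := hemb.integral_map (μ := volume) (fun z => g (ν + z))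
  rw [h2, integral_smul_measure] at h3
  simp only [toLin'_apply, smul_eq_mul] at h3
  rw [← h3, h1, ENNReal.toReal_ofReal (abs_nonneg _), ← mul_assoc, ← abs_mul, mul_inv_cancel₀ hA]
  simp

lemma aux_density {H : ℕ} (ν : Fin H → ℝ) (T : Matrix (Fin H) (Fin H) ℝ) (hT : T.PosDef)
    (f : (Fin H → ℝ) → ℝ) :
    ∫ z, gaussPdfMulti ν T z * f z = ∫ y, f (ofLp y) ∂(multivariateGaussian (toLp 2 ν) T) := by
  set A := CFC.sqrt T with hAdef
  have hAA : A * A = T := CFC.sqrt_mul_sqrt_self _ hT.posSemidef.nonneg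
  have hAt : Aᵀ = A := by
    have := (CFC.sqrt_nonneg T).isSelfAdjoint
    have h : Aᴴ = A := this
    rwa [conjTranspose_eq_transpose_of_trivial] at h
  have hdet : A.det * A.det = T.det := by rw [← det_mul, hAA]
  have hTd := hT.det_pos
  have hA : A.det ≠ 0 := by
    intro h; rw [h] at hdet; simp at hdet; exact hTd.ne hdet
  have hR : ∫ y, f (ofLp y) ∂(multivariateGaussian (toLp 2 ν) T) =
      ∫ u, f (ν + A.mulVec u) ∂(Measure.pi (fun _ : Fin H => gaussianReal 0 1)) := by
    rw [multivariateGaussian, ← map_pi_eq_stdGaussian]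
    have e1 : MeasurableEmbedding (toLp 2 : (Fin H → ℝ) → EuclideanSpace ℝ (Fin H)) :=
      (MeasurableEquiv.toLp 2 (Fin H → ℝ)).measurableEmbedding
    have e2 : MeasurableEmbedding
        (fun x : EuclideanSpace ℝ (Fin H) => toLp 2 ν + toEuclideanCLM (𝕜 := ℝ) (CFC.sqrt T) x) := by
      refine Continuous.measurableEmbedding (by fun_prop) ?_
      intro a b hab
      simp only [add_right_inj] at hab
      have : A.mulVec (ofLp a) = A.mulVec (ofLp b) := by
        simpa using congrArg ofLp hab
      have := (mulVec_injective_iff_isUnit.mpr ((isUnit_iff_isUnit_det _).mpr hA.isUnit)) this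
      exact ofLp_injective _ this
    rw [e2.integral_map, e1.integral_map]
    simp [hAdef]
  rw [hR, aux_pi_integral, aux_change ν A hA, ← integral_const_mul]
  refine integral_congr_ae (Filter.Eventually.of_forall fun u => ?_)
  simp only [← mul_assoc]
  congr 1
  have hq : ∑ i, ((ν + A.mulVec u) i - ν i) * (T⁻¹.mulVec fun j => (ν + A.mulVec u) j - ν j) i
      = ∑ i, u i ^ 2 := by
    have : (fun j => (ν + A.mulVec u) j - ν j) = A.mulVec u := by ext; simp
    rw [this]
    have h2 : T⁻¹.mulVec (A.mulVec u) = A⁻¹.mulVec u := by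
      rw [mulVec_mulVec, ← hAA, Matrix.mul_inv_rev, Matrix.mul_assoc,
        nonsing_inv_mul _ hA.isUnit, Matrix.mul_one]
    rw [h2]
    have h3 : A.mulVec u ⬝ᵥ A⁻¹.mulVec u = u ⬝ᵥ u := by
      rw [← vecMul_transpose, hAt, ← dotProduct_mulVec, mulVec_mulVec,
        mul_nonsing_inv _ hA.isUnit, one_mulVec]
    simpa [dotProduct, sq] using h3
  rw [gaussPdfMulti, hq]
  simp only [gaussianPDFReal, Finset.prod_mul_distrib, ← Real.exp_sum]
  rw [← hdet, Real.sqrt_mul (by positivity), Real.sqrt_mul_self_eq_abs]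
  have : |A.det| ≠ 0 := abs_ne_zero.mpr hA
  have h5 : √((2 * π) ^ H) = √(2 * π) ^ H := by
    rw [Real.sqrt_eq_iff_mul_self_eq (by positivity) (by positivity), ← mul_pow,
      Real.mul_self_sqrt (by positivity)]
  rw [h5]
  simp [Finset.sum_neg_distrib, Finset.sum_div, neg_div]
  field_simp
  rw [← mul_pow, mul_one_div_cancel (by positivity), one_pow]

lemma erf_neg_aux (x : ℝ) : erf (-x) = - erf x := by
  unfold erf
  have := intervalIntegral.integral_comp_neg (a := 0) (b := x) (fun t : ℝ => Real.exp (-t ^ 2))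
  simp only [neg_sq, neg_zero] at this
  rw [this, intervalIntegral.integral_symm (-x) 0]; ring

lemma erf_deriv_aux (x : ℝ) : HasDerivAt erf (2 / √π * Real.exp (-x ^ 2)) x := by
  unfold erf
  have hc : Continuous fun t : ℝ => Real.exp (-t ^ 2) := by fun_prop
  exact (hc.integral_hasStrictDerivAt 0 x).hasDerivAt.const_mul _

lemma erf_tendsto_aux : Filter.Tendsto erf Filter.atTop (nhds 1) := by
  have hi : Integrable fun t : ℝ => Real.exp (-t ^ 2) := by
    simpa using integrable_exp_neg_mul_sq (b := 1) one_pos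
  have h := (intervalIntegral_tendsto_integral_Ioi 0 hi.integrableOn
    (Filter.tendsto_id (x := Filter.atTop))).const_mul (2 / √π)
  have h2 : ∫ t in Set.Ioi (0:ℝ), Real.exp (-t ^ 2) = √π / 2 := by
    simpa using integral_gaussian_Ioi 1
  rw [h2] at h
  have : 2 / √π * (√π / 2) = 1 := by
    have : √π ≠ 0 := by positivity
    field_simp
  rw [this] at h
  exact h

lemma erf_nonneg_aux {x : ℝ} (hx : 0 ≤ x) : 0 ≤ erf x := by
  unfold erf
  exact mul_nonneg (by positivity)
    (intervalIntegral.integral_nonneg hx fun t _ => (Real.exp_pos _).le)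

lemma Mfun_pos_aux (a : ℝ) : 0 < Mfun a := by
  unfold Mfun
  have h : 0 ≤ a * erf (a / √2) := by
    rcases le_total 0 a with h | h
    · exact mul_nonneg h (erf_nonneg_aux (by positivity))
    · have : 0 ≤ erf (-(a / √2)) := erf_nonneg_aux (by
        rw [← neg_div]; exact div_nonneg (by linarith) (by positivity))
      rw [erf_neg_aux] at this
      exact mul_nonneg_of_nonpos_of_nonpos h (by linarith)
  have : 0 < √(2 / π) * Real.exp (-a ^ 2 / 2) := by positivity
  linarith

lemma abs_std_aux (a : ℝ) : ∫ g, |g + a| ∂(gaussianReal 0 1) = Mfun a := by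
  have hid : Integrable (fun g : ℝ => g) (gaussianReal 0 1) :=
    (memLp_id_gaussianReal' 1 (by simp)).integrable le_rfl
  have hga : Integrable (fun g : ℝ => g + a) (gaussianReal 0 1) := hid.add (integrable_const a)
  have hvol : Integrable (fun g : ℝ => gaussianPDFReal 0 1 g * (g + a)) := by
    rw [gaussianReal_of_var_ne_zero _ one_ne_zero,
      integrable_withDensity_iff_integrable_smul' (measurable_gaussianPDF _ _)
      (Filter.Eventually.of_forall fun _ => gaussianPDF_lt_top)] at hga
    simpa [toReal_gaussianPDF] using hga
  have hmean : ∫ g, (g + a) ∂(gaussianReal 0 1) = a := by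
    rw [integral_add hid (integrable_const a)]; simp
  have hpos : ∫ g in Set.Ioi (-a), (g + a) ∂(gaussianReal 0 1) =
      a / 2 - (-(√(2 * π))⁻¹ * Real.exp (-a ^ 2 / 2) - a / 2 * erf (a / √2)) := by
    rw [← integral_indicator measurableSet_Ioi, integral_gaussianReal_eq_integral_smul one_ne_zero]
    have : (fun g : ℝ => gaussianPDFReal 0 1 g • (Set.Ioi (-a)).indicator (fun g => g + a) g) =
      (Set.Ioi (-a)).indicator (fun g : ℝ => gaussianPDFReal 0 1 g * (g + a)) := by
      ext g; by_cases h : g ∈ Set.Ioi (-a) <;> simp [h]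
    rw [this, integral_indicator measurableSet_Ioi]
    have hd : ∀ g : ℝ, HasDerivAt
        (fun g => -(√(2 * π))⁻¹ * Real.exp (-g ^ 2 / 2) + a / 2 * erf (g / √2))
        (gaussianPDFReal 0 1 g * (g + a)) g := by
      intro g
      have d1 : HasDerivAt (fun g : ℝ => -g ^ 2 / 2) (-g) g := by
        have := ((hasDerivAt_pow 2 g).neg).div_const 2
        refine this.congr_deriv ?_
        simp; ring
      have d2 := (erf_deriv_aux (g / √2)).comp g ((hasDerivAt_id g).div_const (√2))
      have d3 := (d1.exp.const_mul (-(√(2 * π))⁻¹)).add (d2.const_mul (a / 2))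
      refine d3.congr_deriv ?_
      have e : -(g / √2) ^ 2 = -g ^ 2 / 2 := by
        rw [div_pow, Real.sq_sqrt (by norm_num)]; ring
      rw [e]
      simp only [gaussianPDFReal, NNReal.coe_one, mul_one, sub_zero]
      have : √(2 * π) = √2 * √π := Real.sqrt_mul (by norm_num) _
      rw [this]
      have h1 : √2 ≠ 0 := by positivity
      have h2 : √π ≠ 0 := by positivity
      field_simp
    have ht : Filter.Tendsto
        (fun g => -(√(2 * π))⁻¹ * Real.exp (-g ^ 2 / 2) + a / 2 * erf (g / √2))
        Filter.atTop (nhds (a / 2)) := by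
      have t1 : Filter.Tendsto (fun g : ℝ => Real.exp (-g ^ 2 / 2)) Filter.atTop (nhds 0) := by
        refine Real.tendsto_exp_atBot.comp ?_
        have := (Filter.tendsto_pow_atTop (α := ℝ) (two_ne_zero)).atTop_div_const (r := 2) (by norm_num)
        refine (Filter.tendsto_neg_atTop_atBot.comp this).congr fun g => ?_
        simp [neg_div]
      have t2 : Filter.Tendsto (fun g : ℝ => erf (g / √2)) Filter.atTop (nhds 1) :=
        erf_tendsto_aux.comp (Filter.tendsto_id.atTop_div_const (by positivity))
      simpa using (t1.const_mul (-(√(2 * π))⁻¹)).add (t2.const_mul (a / 2))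
    rw [integral_Ioi_of_hasDerivAt_of_tendsto' (fun x _ => hd x) hvol.integrableOn ht,
      show -a / √2 = -(a / √2) from neg_div _ _, erf_neg_aux, neg_sq]
    ring
  have habs : ∀ g : ℝ, |g + a| = 2 * (Set.Ioi (-a)).indicator (fun g => g + a) g - (g + a) := by
    intro g
    by_cases h : g ∈ Set.Ioi (-a)
    · have h' : -a < g := h
      rw [Set.indicator_of_mem h, abs_of_nonneg (by linarith)]; ring
    · have h' : g ≤ -a := not_lt.mp h
      rw [Set.indicator_of_notMem h, abs_of_nonpos (by linarith)]; ring
  simp_rw [habs]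
  rw [integral_sub ((hga.indicator measurableSet_Ioi).const_mul 2) hga, integral_const_mul,
    integral_indicator measurableSet_Ioi, hpos, hmean, Mfun]
  have h1 : √(2 / π) = 2 * (√(2 * π))⁻¹ := by
    rw [Real.sqrt_div (by norm_num), Real.sqrt_mul (by norm_num)]
    have h1 : √2 ≠ 0 := by positivity
    have h2 : √π ≠ 0 := by positivity
    field_simp
    exact Real.sq_sqrt (by norm_num)
  rw [h1]; ring

lemma abs_gauss_aux (m t : ℝ) (ht : 0 < t) :
    ∫ z, |z| ∂(gaussianReal m t.toNNReal) = √t * Mfun (m / √t) := by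
  have hs : 0 < √t := Real.sqrt_pos.mpr ht
  have hlaw : gaussianReal m t.toNNReal =
      (gaussianReal 0 1).map (fun g => √t * (g + m / √t)) := by
    have : (fun g => √t * (g + m / √t)) = (fun g : ℝ => √t * g) ∘ (fun g => g + m / √t) := rfl
    rw [this, ← Measure.map_map (by fun_prop) (by fun_prop), gaussianReal_map_add_const,
      gaussianReal_map_const_mul]
    congr 1
    · field_simp; ring
    · ext; simp [Real.sq_sqrt ht.le, ht.le]
  rw [hlaw, integral_map (by fun_prop) (by fun_prop), ← abs_std_aux, ← integral_const_mul]
  simp [abs_mul, abs_of_pos hs]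

lemma eval_memLp_aux {H : ℕ} (ν : Fin H → ℝ) (T : Matrix (Fin H) (Fin H) ℝ) (i : Fin H) :
    MemLp (fun y : EuclideanSpace ℝ (Fin H) => y i) 2 (multivariateGaussian (toLp 2 ν) T) := by
  have h : MemLp id 2 (multivariateGaussian (toLp 2 ν) T) := IsGaussian.memLp_two_id
  exact (EuclideanSpace.proj (𝕜 := ℝ) i).comp_memLp' h

lemma eval_mean_aux {H : ℕ} (ν : Fin H → ℝ) (T : Matrix (Fin H) (Fin H) ℝ) (hT : T.PosDef)
    (i : Fin H) :
    ∫ y : EuclideanSpace ℝ (Fin H), y i ∂(multivariateGaussian (toLp 2 ν) T) = ν i := by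
  have h := measurePreserving_eval_multivariateGaussian (μ := toLp 2 ν) hT.posSemidef (i := i)
  have h2 := integral_map (μ := multivariateGaussian (toLp 2 ν) T) h.measurable.aemeasurable
    (f := fun z : ℝ => z) (by fun_prop)
  rw [h.map_eq, integral_id_gaussianReal] at h2
  simpa using h2.symm

lemma eval_abs_aux {H : ℕ} (ν : Fin H → ℝ) (T : Matrix (Fin H) (Fin H) ℝ) (hT : T.PosDef)
    (i : Fin H) :
    ∫ y : EuclideanSpace ℝ (Fin H), |y i| ∂(multivariateGaussian (toLp 2 ν) T) =
      √(T i i) * Mfun (ν i / √(T i i)) := by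
  have h := measurePreserving_eval_multivariateGaussian (μ := toLp 2 ν) hT.posSemidef (i := i)
  have h2 := integral_map (μ := multivariateGaussian (toLp 2 ν) T) h.measurable.aemeasurable
    (f := fun z : ℝ => |z|) (by fun_prop)
  rw [h.map_eq, abs_gauss_aux _ _ hT.diag_pos] at h2
  simpa using h2.symm

lemma eval_cov_aux {H : ℕ} (ν : Fin H → ℝ) (T : Matrix (Fin H) (Fin H) ℝ) (hT : T.PosDef)
    (i j : Fin H) :
    ∫ y : EuclideanSpace ℝ (Fin H), (y i - ν i) * (y j - ν j)
      ∂(multivariateGaussian (toLp 2 ν) T) = T i j := by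
  have h := covariance_eval_multivariateGaussian (μ := toLp 2 ν) hT.posSemidef i j
  rw [covariance, eval_mean_aux ν T hT, eval_mean_aux ν T hT] at h
  exact h

lemma eval_int2_aux {H : ℕ} (ν : Fin H → ℝ) (T : Matrix (Fin H) (Fin H) ℝ)
    (i j : Fin H) :
    Integrable (fun y : EuclideanSpace ℝ (Fin H) => (y i - ν i) * (y j - ν j))
      (multivariateGaussian (toLp 2 ν) T) :=
  ((eval_memLp_aux ν T i).sub (memLp_const (ν i))).integrable_mul
    ((eval_memLp_aux ν T j).sub (memLp_const (ν j)))

lemma quad_aux {H : ℕ} (ν : Fin H → ℝ) (T : Matrix (Fin H) (Fin H) ℝ) (hT : T.PosDef)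
    (B : Matrix (Fin H) (Fin H) ℝ) :
    Integrable (fun y : EuclideanSpace ℝ (Fin H) =>
      ∑ i, (y i - ν i) * (B.mulVec fun j => y j - ν j) i) (multivariateGaussian (toLp 2 ν) T) ∧
    ∫ y : EuclideanSpace ℝ (Fin H), ∑ i, (y i - ν i) * (B.mulVec fun j => y j - ν j) i
      ∂(multivariateGaussian (toLp 2 ν) T) = trace (B * T) := by
  have e : ∀ y : EuclideanSpace ℝ (Fin H),
      ∑ i, (y i - ν i) * (B.mulVec fun j => y j - ν j) i =
      ∑ i, ∑ j, B i j * ((y i - ν i) * (y j - ν j)) := by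
    intro y
    refine Finset.sum_congr rfl fun i _ => ?_
    simp only [mulVec, dotProduct, Finset.mul_sum]
    exact Finset.sum_congr rfl fun j _ => by ring
  have hi : ∀ i j, Integrable (fun y : EuclideanSpace ℝ (Fin H) =>
      B i j * ((y i - ν i) * (y j - ν j))) (multivariateGaussian (toLp 2 ν) T) :=
    fun i j => (eval_int2_aux ν T i j).const_mul _
  simp_rw [e]
  refine ⟨integrable_finsetSum _ fun i _ => integrable_finsetSum _ fun j _ => hi i j, ?_⟩
  rw [integral_finsetSum _ fun i _ => integrable_finsetSum _ fun j _ => hi i j]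
  simp only [trace, diag, mul_apply]
  refine Finset.sum_congr rfl fun i _ => ?_
  rw [integral_finsetSum _ fun j _ => hi i j]
  refine Finset.sum_congr rfl fun j _ => ?_
  rw [integral_const_mul, eval_cov_aux ν T hT]
  have : T j i = T i j := by
    have := hT.isHermitian.apply i j
    simpa using this
  rw [this]

lemma obs_aux {D H : ℕ} (x : Fin D → ℝ) (W : Matrix (Fin D) (Fin H) ℝ)
    (ν : Fin H → ℝ) (T : Matrix (Fin H) (Fin H) ℝ) (hT : T.PosDef) :
    Integrable (fun y : EuclideanSpace ℝ (Fin H) =>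
      ∑ i, (x i - W.mulVec (ofLp y) i) ^ 2) (multivariateGaussian (toLp 2 ν) T) ∧
    ∫ y : EuclideanSpace ℝ (Fin H), ∑ i, (x i - W.mulVec (ofLp y) i) ^ 2
      ∂(multivariateGaussian (toLp 2 ν) T) =
      trace (Wᵀ * W * T) + ∑ i, (W.mulVec ν i - x i) ^ 2 := by
  set c : Fin D → ℝ := W.mulVec ν - x with hc
  set b : Fin H → ℝ := fun j => 2 * ∑ i, c i * W i j with hb
  have e : ∀ y : EuclideanSpace ℝ (Fin H),
      ∑ i, (x i - W.mulVec (ofLp y) i) ^ 2 =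
      (∑ i, (y i - ν i) * ((Wᵀ * W).mulVec fun j => y j - ν j) i) +
        (∑ j, b j * (y j - ν j) + ∑ i, (W.mulVec ν i - x i) ^ 2) := by
    intro y
    set w : Fin H → ℝ := fun j => y j - ν j with hw
    have h1 : ofLp y = w + ν := by ext j; simp [hw]
    have h2 : ∑ i, w i * ((Wᵀ * W).mulVec w) i = ∑ i, (W.mulVec w i) ^ 2 := by
      have : w ⬝ᵥ (Wᵀ * W).mulVec w = W.mulVec w ⬝ᵥ W.mulVec w := by
        rw [← mulVec_mulVec, dotProduct_mulVec, vecMul_transpose]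
      simpa [dotProduct, sq] using this
    have h3 : ∑ j, b j * w j = ∑ i, 2 * c i * W.mulVec w i := by
      simp only [hb, mulVec, dotProduct, Finset.mul_sum, Finset.sum_mul]
      rw [Finset.sum_comm]
      exact Finset.sum_congr rfl fun i _ => Finset.sum_congr rfl fun j _ => by ring
    change _ = (∑ i, w i * ((Wᵀ * W).mulVec w) i) + (∑ j, b j * w j + _)
    rw [h2, h3, ← Finset.sum_add_distrib, ← Finset.sum_add_distrib]
    refine Finset.sum_congr rfl fun i _ => ?_
    rw [h1, mulVec_add]
    simp only [Pi.add_apply, hc, Pi.sub_apply]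
    ring
  obtain ⟨q1, q2⟩ := quad_aux ν T hT (Wᵀ * W)
  have hl : ∀ j, Integrable (fun y : EuclideanSpace ℝ (Fin H) => y j)
      (multivariateGaussian (toLp 2 ν) T) :=
    fun j => (eval_memLp_aux ν T j).integrable (by norm_num)
  have hlj : ∀ j, Integrable (fun y : EuclideanSpace ℝ (Fin H) => b j * (y j - ν j))
      (multivariateGaussian (toLp 2 ν) T) :=
    fun j => ((hl j).sub (integrable_const _)).const_mul _
  have hls := integrable_finsetSum Finset.univ fun j _ => hlj j
  simp_rw [e]
  have hlc : Integrable (fun y : EuclideanSpace ℝ (Fin H) =>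
      ∑ j, b j * (y j - ν j) + ∑ i, (W.mulVec ν i - x i) ^ 2)
      (multivariateGaussian (toLp 2 ν) T) := hls.add (integrable_const _)
  refine ⟨q1.add hlc, ?_⟩
  rw [integral_add q1 hlc, q2, integral_add hls (integrable_const _),
    integral_finsetSum _ fun j _ => hlj j]
  have hz : ∀ j, ∫ y : EuclideanSpace ℝ (Fin H), b j * (y j - ν j)
      ∂(multivariateGaussian (toLp 2 ν) T) = 0 := by
    intro j
    rw [integral_const_mul, integral_sub (hl j) (integrable_const _), eval_mean_aux ν T hT]
    simp
  simp [hz]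

lemma log_obs_aux {D H : ℕ} (W : Matrix (Fin D) (Fin H) ℝ) (s : ℝ) (hs : 0 ≤ s)
    (x : Fin D → ℝ) (z : Fin H → ℝ) (hD : s = 0 → D = 0 ∨ 0 < D) :
    Real.log (gaussObsPdf W s x z) =
      -((D : ℝ) / 2) * Real.log (2 * π * s) - (∑ i, (x i - W.mulVec z i) ^ 2) / (2 * s) := by
  unfold gaussObsPdf
  rcases hs.eq_or_lt with h | h
  · subst h
    rcases Nat.eq_zero_or_pos D with h | h
    · subst h; simp
    · have : (-(D : ℝ) / 2) ≠ 0 := by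
        have : (0 : ℝ) < D := by exact_mod_cast h
        intro h'; linarith
      simp [Real.zero_rpow this]
  · have h1 : 0 < 2 * π * s := by positivity
    rw [Real.log_mul (Real.rpow_pos_of_pos h1 _).ne' (Real.exp_pos _).ne', Real.log_exp,
      Real.log_rpow h1]
    ring

lemma log_lap_aux {H : ℕ} (lam : Fin H → ℝ) (hl : ∀ h, 0 < lam h) (z : Fin H → ℝ) :
    Real.log (laplacePdf lam z) = ∑ h, (-Real.log (2 * lam h) - |z h| / lam h) := by
  unfold laplacePdf
  rw [Real.log_prod]
  · refine Finset.sum_congr rfl fun h _ => ?_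
    have := hl h
    rw [Real.log_mul (by positivity) (Real.exp_pos _).ne', Real.log_exp, one_div, Real.log_inv]
    ring
  · intro h _
    have := hl h
    positivity

lemma log_gauss_aux {H : ℕ} (ν : Fin H → ℝ) (T : Matrix (Fin H) (Fin H) ℝ) (hT : T.PosDef)
    (z : Fin H → ℝ) :
    Real.log (gaussPdfMulti ν T z) = -(1 / 2) * Real.log ((2 * π) ^ H * T.det) -
      (∑ i, (z i - ν i) * (T⁻¹.mulVec fun j => z j - ν j) i) / 2 := by
  unfold gaussPdfMulti
  have h : 0 < (2 * π) ^ H * T.det := mul_pos (by positivity) hT.det_pos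
  rw [Real.log_mul (inv_ne_zero (Real.sqrt_pos.mpr h).ne') (Real.exp_pos _).ne', Real.log_exp,
    Real.log_inv, Real.log_sqrt h.le]
  ring

lemma per_n_aux {D H : ℕ} (x : Fin D → ℝ) (W : Matrix (Fin D) (Fin H) ℝ)
    (ν : Fin H → ℝ) (T : Matrix (Fin H) (Fin H) ℝ) (hT : T.PosDef)
    (s : ℝ) (hs : 0 ≤ s) (lam : Fin H → ℝ) (hl : ∀ h, 0 < lam h) :
    ∫ z : Fin H → ℝ, gaussPdfMulti ν T z *
          (Real.log (gaussObsPdf W s x z) + Real.log (laplacePdf lam z) -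
            Real.log (gaussPdfMulti ν T z)) =
      (1 / 2 : ℝ) * Real.log ((2 * Real.pi * Real.exp 1) • T).det
      - ∑ h, (Real.log (2 * lam h) + √(T h h) * Mfun (ν h / √(T h h)) / lam h)
      - ((D : ℝ) / 2 * Real.log (2 * π * s) +
        (trace (Wᵀ * W * T) + ∑ i, (W.mulVec ν i - x i) ^ 2) / (2 * s)) := by
  rw [aux_density ν T hT]
  simp_rw [log_obs_aux W s hs x _ (fun _ => Nat.eq_zero_or_pos D), log_lap_aux lam hl,
    log_gauss_aux ν T hT]
  obtain ⟨o1, o2⟩ := obs_aux x W ν T hT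
  obtain ⟨q1, q2⟩ := quad_aux ν T hT T⁻¹
  have hla : ∀ h, Integrable (fun y : EuclideanSpace ℝ (Fin H) => |y h|)
      (multivariateGaussian (toLp 2 ν) T) :=
    fun j => ((eval_memLp_aux ν T j).integrable (by norm_num)).abs
  have hlb : ∀ h, Integrable (fun y : EuclideanSpace ℝ (Fin H) =>
      -Real.log (2 * lam h) - |y h| / lam h) (multivariateGaussian (toLp 2 ν) T) :=
    fun h => (integrable_const _).sub ((hla h).div_const _)
  have hls := integrable_finsetSum Finset.univ fun h _ => hlb h
  have ho : Integrable (fun y : EuclideanSpace ℝ (Fin H) =>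
      -((D : ℝ) / 2) * Real.log (2 * π * s) -
        (∑ i, (x i - W.mulVec (ofLp y) i) ^ 2) / (2 * s)) _ := (integrable_const (μ := multivariateGaussian (toLp 2 ν) T)
    (-((D : ℝ) / 2) * Real.log (2 * π * s))).sub (o1.div_const (2 * s))
  have hq : Integrable (fun y : EuclideanSpace ℝ (Fin H) =>
      -(1 / 2) * Real.log ((2 * π) ^ H * T.det) -
        (∑ i, (y i - ν i) * (T⁻¹.mulVec fun j => y j - ν j) i) / 2) _ := (integrable_const (μ := multivariateGaussian (toLp 2 ν) T)
    (-(1 / 2) * Real.log ((2 * π) ^ H * T.det))).sub (q1.div_const 2)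
  have hos : Integrable (fun y : EuclideanSpace ℝ (Fin H) =>
      -((D : ℝ) / 2) * Real.log (2 * π * s) -
        (∑ i, (x i - W.mulVec (ofLp y) i) ^ 2) / (2 * s) +
        ∑ h, (-Real.log (2 * lam h) - |y h| / lam h)) (multivariateGaussian (toLp 2 ν) T) :=
    ho.add hls
  rw [integral_sub hos hq, integral_add ho hls,
    integral_sub (integrable_const _) (o1.div_const (2 * s)),
    integral_sub (integrable_const _) (q1.div_const 2),
    integral_finsetSum _ fun h _ => hlb h, integral_div, integral_div, o2, q2]
  have h1 : ∀ h, ∫ y : EuclideanSpace ℝ (Fin H), (-Real.log (2 * lam h) - |y h| / lam h)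
      ∂(multivariateGaussian (toLp 2 ν) T) =
      -(Real.log (2 * lam h) + √(T h h) * Mfun (ν h / √(T h h)) / lam h) := by
    intro h
    rw [integral_sub (integrable_const _) ((hla h).div_const _), integral_div,
      eval_abs_aux ν T hT]
    simp
    ring
  simp_rw [h1]
  have htr : trace (T⁻¹ * T) = (H : ℝ) := by
    rw [nonsing_inv_mul _ hT.det_pos.ne'.isUnit]; simp
  have hdet : Real.log ((2 * Real.pi * Real.exp 1) • T).det =
      Real.log ((2 * π) ^ H * T.det) + H := by
    rw [det_smul, Fintype.card_fin, mul_pow, mul_right_comm,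
      Real.log_mul (mul_pos (by positivity) hT.det_pos).ne' (by positivity), Real.log_pow]
    simp
  rw [htr, hdet]
  simp only [integral_const, probReal_univ, one_smul, Finset.sum_neg_distrib]
  ring

/-- **Entropy-based analytic ELBO.**  The ELBO of the sparse coding model with Gaussian
variational distributions `q_n = N(nu_n, T_n)` (with positive definite `T_n`), evaluated
at the optimal scales `lamopt` and optimal variance `sigma2opt`, equals the fully
analytic entropy sum
`(1/N)*sum_n (1/2)*log det(2*pi*e*T_n) - sum_h log(2*e*lamopt_h)
  - (D/2)*log(2*pi*e*sigma2opt)`. -/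
theorem entropy_based_analytic_elbo
    (N D H : ℕ) (hN : 0 < N)
    (x : Fin N → Fin D → ℝ) (W : Matrix (Fin D) (Fin H) ℝ)
    (ν : Fin N → Fin H → ℝ) (T : Fin N → Matrix (Fin H) (Fin H) ℝ)
    (hTpd : ∀ n, (T n).PosDef)
    (σ2opt : ℝ)
    (hσ2opt : σ2opt = (1 / (N * D) : ℝ) * ∑ n,
      (Matrix.trace (Wᵀ * W * T n) + ∑ i, (W.mulVec (ν n) i - x n i) ^ 2))
    (lamopt : Fin H → ℝ)
    (hlamopt : ∀ h, lamopt h = (1 / N : ℝ) * ∑ n,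
      Real.sqrt (T n h h) * Mfun (ν n h / Real.sqrt (T n h h))) :
    (1 / N : ℝ) * ∑ n, ∫ z : Fin H → ℝ,
        gaussPdfMulti (ν n) (T n) z *
          (Real.log (gaussObsPdf W σ2opt (x n) z) + Real.log (laplacePdf lamopt z) -
            Real.log (gaussPdfMulti (ν n) (T n) z)) =
      (1 / N : ℝ) * ∑ n, (1 / 2 : ℝ) * Real.log ((2 * Real.pi * Real.exp 1) • T n).det -
        ∑ h, Real.log (2 * Real.exp 1 * lamopt h) -
        ((D : ℝ) / 2) * Real.log (2 * Real.pi * Real.exp 1 * σ2opt) := by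
  have hN' : (N : ℝ) ≠ 0 := by exact_mod_cast hN.ne'
  have hNp : (0 : ℝ) < N := by exact_mod_cast hN
  have hs : 0 ≤ σ2opt := by
    rw [hσ2opt]
    refine mul_nonneg (by positivity) (Finset.sum_nonneg fun n _ => ?_)
    rw [← (obs_aux (x n) W (ν n) (T n) (hTpd n)).2]
    exact integral_nonneg fun y => Finset.sum_nonneg fun i _ => sq_nonneg _
  have hl : ∀ h, 0 < lamopt h := by
    intro h
    rw [hlamopt]
    have : Nonempty (Fin N) := ⟨⟨0, hN⟩⟩
    refine mul_pos (by positivity) (Finset.sum_pos (fun n _ => ?_) Finset.univ_nonempty)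
    exact mul_pos (Real.sqrt_pos.mpr (hTpd n).diag_pos) (Mfun_pos_aux _)
  simp_rw [fun n => per_n_aux (x n) W (ν n) (T n) (hTpd n) σ2opt hs lamopt hl]
  rw [Finset.sum_sub_distrib, Finset.sum_sub_distrib, mul_sub, mul_sub]
  congr 1
  · congr 1
    rw [Finset.sum_comm, Finset.mul_sum]
    refine Finset.sum_congr rfl fun h _ => ?_
    have hlh := hl h
    rw [Finset.sum_add_distrib, ← Finset.sum_div, mul_add, mul_div_assoc', ← hlamopt h,
      div_self hlh.ne', mul_right_comm 2 (Real.exp 1), 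
      Real.log_mul (x := 2 * lamopt h) (y := Real.exp 1) (by positivity) (by positivity), Real.log_exp]
    simp
    field_simp
  · rw [Finset.sum_add_distrib, ← Finset.sum_div, mul_add]
    simp only [Finset.sum_const, Finset.card_univ, Fintype.card_fin, nsmul_eq_mul]
    rcases hs.eq_or_lt with h | h
    · rw [← h]; simp
    · have hD : (D : ℝ) ≠ 0 := by
        intro h0
        rw [h0] at hσ2opt
        simp at hσ2opt
        exact h.ne' hσ2opt
      have hS : ∑ n, (Matrix.trace (Wᵀ * W * T n) + ∑ i, (W.mulVec (ν n) i - x n i) ^ 2)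
          = N * D * σ2opt := by
        rw [hσ2opt]; field_simp
      rw [hS, mul_right_comm (2 * π) (Real.exp 1), 
        Real.log_mul (x := 2 * π * σ2opt) (y := Real.exp 1) (by positivity) (by positivity),
        Real.log_exp]
      have := h.ne'
      field_simp
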